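/- arXiv:0910.2445 — 2 statements merged into one kernel-verified Lean document; each statement's English description precedes it below -/
import Mathlib

section
/- Let G and W be groups acting on a set X with commuting actions (g • (w • x) = w • (g • x) for all g ∈ G, w ∈ W, x ∈ X). Let Ψ ∈ X be a point whose stabilizer in G is trivial, and let N = {w ∈ W : w • Ψ = Ψ} be the stabilizer of Ψ in W. Let (g_i)_{i∈I} be a family of elements of G and (ν_i)_{i∈I} a family of elements of W such that ν_i • Ψ = g_i • Ψ for every i ∈ I. Then for every finite signed word ((i_1,ε_1),…,(i_k,ε_k)) with indices i_j ∈ I and exponents ε_j ∈ {1,−1}, the product g_{i_1}^{ε_1} g_{i_2}^{ε_2} ⋯ g_{i_k}^{ε_k} equals the identity of G if and only if the reversed product ν_{i_k}^{ε_k} ⋯ ν_{i_2}^{ε_2} ν_{i_1}^{ε_1} lies in N. (Theorem 4: words w in the generators ρ_i of Aut(R) satisfy w = 1 in Aut(R) exactly when their image wψ stabilizes the base flag.) -/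
/-!
Since the actions commute, the product of a signed word in the `g i` and the product of the reversed
word in the `ν i` send `Ψ` to the same point (`signedProd_smul_eq_reverse`, by induction on the
word). Hence one fixes `Ψ` exactly when the other does, and in `G` only the identity fixes `Ψ`.
-/

/-- The product `g_{i₁}^{ε₁} g_{i₂}^{ε₂} ⋯ g_{i_k}^{ε_k}` associated to a finite signed
word `((i₁,ε₁),…,(i_k,ε_k))`, where the Boolean `true` stands for exponent `1` and
`false` for exponent `-1`. -/
def signedProd {G : Type*} [Group G] {I : Type*} (g : I → G) (w : List (I × Bool)) : G :=
  (w.map (fun p => if p.2 then g p.1 else (g p.1)⁻¹)).prod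

/-- The reversal of the word comes from here: a letter of `G` prepended to the word passes through
the `W`-product of the tail, by commutation, and becomes the innermost letter of `W`. -/
lemma signedProd_smul_eq_reverse
    {G W X : Type*} [Group G] [Group W] [MulAction G X] [MulAction W X]
    (hcomm : ∀ (g : G) (w : W) (x : X), g • (w • x) = w • (g • x))
    (Ψ : X) {I : Type*} (g : I → G) (ν : I → W) (hν : ∀ i : I, ν i • Ψ = g i • Ψ)
    (word : List (I × Bool)) :
    signedProd g word • Ψ = signedProd ν word.reverse • Ψ := by
  have hinv : ∀ i : I, (ν i)⁻¹ • Ψ = (g i)⁻¹ • Ψ := fun i => by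
    rw [inv_smul_eq_iff, ← hcomm, hν, inv_smul_smul]
  induction word with
  | nil => simp [signedProd]
  | cons p t ih =>
    obtain ⟨i, b⟩ := p
    simp only [signedProd, List.reverse_cons, List.map_cons, List.map_append, List.map_nil,
      List.prod_cons, List.prod_append, List.prod_nil, mul_one, mul_smul] at ih ⊢
    rw [ih, hcomm]
    cases b <;> simp [hν, hinv]

/-- Theorem 4: with commuting actions of `G` and `W` on `X`, a base point
`Ψ` with trivial `G`-stabilizer, `N` the `W`-stabilizer of `Ψ`, and families `(g_i)`,
`(ν_i)` with `ν_i • Ψ = g_i • Ψ`, a signed word in the `g_i` equals `1` in `G` if and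
only if the reversed signed word in the `ν_i` lies in `N`. -/
theorem signedWord_eq_one_iff_reversed_mem_stabilizer
    {G W X : Type*} [Group G] [Group W] [MulAction G X] [MulAction W X]
    (hcomm : ∀ (g : G) (w : W) (x : X), g • (w • x) = w • (g • x))
    (Ψ : X) (htriv : ∀ g : G, g • Ψ = Ψ → g = 1)
    {I : Type*} (g : I → G) (ν : I → W) (hν : ∀ i : I, ν i • Ψ = g i • Ψ)
    (word : List (I × Bool)) :
    signedProd g word = 1 ↔ signedProd ν word.reverse ∈ MulAction.stabilizer W Ψ := by
  rw [MulAction.mem_stabilizer_iff, ← signedProd_smul_eq_reverse hcomm Ψ g ν hν word]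
  exact ⟨fun h => by rw [h, one_smul], htriv _⟩
end

section
/- Let G and W be groups acting on a set X with commuting actions (g • (w • x) = w • (g • x) for all g ∈ G, w ∈ W, x ∈ X). Let Ψ ∈ X have trivial stabilizer in G, let N = {w ∈ W : w • Ψ = Ψ}, and let (g_i)_{i∈I} in G and (ν_i)_{i∈I} in W satisfy ν_i • Ψ = g_i • Ψ for all i. Let V be the subgroup of W generated by {ν_i : i ∈ I}. Then N ∩ V equals the set of all elements of W of the form ν_{i_k}^{ε_k} ⋯ ν_{i_2}^{ε_2} ν_{i_1}^{ε_1}, where ((i_1,ε_1),…,(i_k,ε_k)) ranges over finite signed words (i_j ∈ I, ε_j ∈ {1,−1}) such that g_{i_1}^{ε_1} g_{i_2}^{ε_2} ⋯ g_{i_k}^{ε_k} = 1 in G. (Theorem 4: the set N ∩ V is the set of all images wψ of words w in the ρ_i such that w = 1 in Aut(R).) -/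
theorem signedProd_cons {G : Type*} [Group G] {I : Type*} (g : I → G) (p : I × Bool)
    (w : List (I × Bool)) :
    signedProd g (p :: w) = (if p.2 then g p.1 else (g p.1)⁻¹) * signedProd g w := by
  simp [signedProd]

theorem signedProd_append {G : Type*} [Group G] {I : Type*} (g : I → G)
    (v w : List (I × Bool)) :
    signedProd g (v ++ w) = signedProd g v * signedProd g w := by
  simp [signedProd]

theorem mem_closure_range_iff_signedProd {W : Type*} [Group W] {I : Type*} (ν : I → W) (w : W) :
    w ∈ Subgroup.closure (Set.range ν) ↔ ∃ word : List (I × Bool), w = signedProd ν word := by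
  constructor
  · intro h
    induction h using Subgroup.closure_induction_left with
    | one => exact ⟨[], by simp [signedProd]⟩
    | mul_left x hx y _ ih =>
      obtain ⟨i, rfl⟩ := hx
      obtain ⟨l, rfl⟩ := ih
      exact ⟨(i, true) :: l, by simp [signedProd_cons]⟩
    | inv_mul_cancel x hx y _ ih =>
      obtain ⟨i, rfl⟩ := hx
      obtain ⟨l, rfl⟩ := ih
      exact ⟨(i, false) :: l, by simp [signedProd_cons]⟩
  · rintro ⟨l, rfl⟩
    refine Subgroup.list_prod_mem _ fun x hx => ?_
    obtain ⟨p, -, rfl⟩ := List.mem_map.mp hx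
    have hp : ν p.1 ∈ Subgroup.closure (Set.range ν) := Subgroup.subset_closure ⟨p.1, rfl⟩
    split_ifs
    · exact hp
    · exact inv_mem hp

/-- The order of the word is reversed because each `g i` has to be moved past the remaining
elements of `W` before the next letter can act on `Ψ`. -/
theorem signedProd_reverse_smul
    {G W X : Type*} [Group G] [Group W] [MulAction G X] [MulAction W X]
    (hcomm : ∀ (g : G) (w : W) (x : X), g • (w • x) = w • (g • x))
    (Ψ : X) {I : Type*} (g : I → G) (ν : I → W) (hν : ∀ i : I, ν i • Ψ = g i • Ψ)
    (word : List (I × Bool)) :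
    signedProd ν word.reverse • Ψ = signedProd g word • Ψ := by
  induction word with
  | nil => simp [signedProd]
  | cons p t ih =>
    have hp : (if p.2 then ν p.1 else (ν p.1)⁻¹) • Ψ =
        (if p.2 then g p.1 else (g p.1)⁻¹) • Ψ := by
      split_ifs
      · exact hν p.1
      · rw [inv_smul_eq_iff, ← hcomm, hν, inv_smul_smul]
    have hsingle : signedProd ν [p] = if p.2 then ν p.1 else (ν p.1)⁻¹ := by
      simp [signedProd]
    rw [List.reverse_cons, signedProd_append, hsingle, mul_smul, hp, ← hcomm, ih,
      signedProd_cons, mul_smul]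

/-- Theorem 4: with commuting actions of `G` and `W` on `X`, a base point
`Ψ` with trivial `G`-stabilizer, `N` the `W`-stabilizer of `Ψ`, families `(g_i)`, `(ν_i)`
with `ν_i • Ψ = g_i • Ψ`, and `V` the subgroup of `W` generated by the `ν_i`, the set
`N ∩ V` consists exactly of the reversed signed products `ν_{i_k}^{ε_k} ⋯ ν_{i₁}^{ε₁}`
over signed words with `g_{i₁}^{ε₁} ⋯ g_{i_k}^{ε_k} = 1` in `G`. -/
theorem stabilizer_inter_closure_eq_images_of_trivial_words
    {G W X : Type*} [Group G] [Group W] [MulAction G X] [MulAction W X]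
    (hcomm : ∀ (g : G) (w : W) (x : X), g • (w • x) = w • (g • x))
    (Ψ : X) (htriv : ∀ g : G, g • Ψ = Ψ → g = 1)
    {I : Type*} (g : I → G) (ν : I → W) (hν : ∀ i : I, ν i • Ψ = g i • Ψ) :
    ((MulAction.stabilizer W Ψ : Set W) ∩ (Subgroup.closure (Set.range ν) : Set W)) =
      {w : W | ∃ word : List (I × Bool),
        signedProd g word = 1 ∧ w = signedProd ν word.reverse} := by
  ext w
  simp only [Set.mem_inter_iff, SetLike.mem_coe, MulAction.mem_stabilizer_iff, Set.mem_ofPred_eq,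
    mem_closure_range_iff_signedProd]
  constructor
  · rintro ⟨hw, l, rfl⟩
    refine ⟨l.reverse, htriv _ ?_, by rw [List.reverse_reverse]⟩
    rw [← signedProd_reverse_smul hcomm Ψ g ν hν, List.reverse_reverse, hw]
  · rintro ⟨l, hl, rfl⟩
    exact ⟨by rw [signedProd_reverse_smul hcomm Ψ g ν hν, hl, one_smul], l.reverse, rfl⟩
end
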